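/- Let x₁, …, xₙ ∈ ℝ^D with xᵢ = zᵢ + yᵢ, where each zᵢ lies in a linear subspace S of ℝ^D and each yᵢ lies in the orthogonal complement of S, and let the embeddings be x̃ᵢ = zᵢ + rᵢ with each rᵢ also in the orthogonal complement of S. Assume not all xᵢ are equal and not all yᵢ are equal, and suppose Σ_{i,j} ‖yᵢ − yⱼ‖² = (1−p)·Σ_{i,j} ‖xᵢ − xⱼ‖² for some p ∈ [0,1). Then the Stress of the embedding satisfies Λ_S² ≤ (1−p)·Λ_S(Y,R)², where Λ_S(Y,R)² = Σ_{i,j}(‖yᵢ − yⱼ‖ − ‖rᵢ − rⱼ‖)² / Σ_{i,j}‖yᵢ − yⱼ‖² is the Stress between the residual points yᵢ and their projections rᵢ. -/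

import Mathlib

/-!
If `a ⟂ b`, then `‖a + b‖` is the modulus of the complex number `‖a‖ + ‖b‖ i`. For `b` and `c` both
orthogonal to `a`, the reverse triangle inequality in `ℂ` therefore shows that adding `a` to both
vectors cannot increase the discrepancy of their norms. Applied to all pairs of points, this says
that keeping the component `z` exactly costs no stress beyond that of the residuals; the factor
`1 - p` only accounts for the change of normalization.
-/

/-- The square of the Stress `Λ_S` of an embedding `x'` of the points `x`, each unordered pair of
points being counted twice. The value is `0` by convention when all `x i` coincide. -/
noncomputable def sqStress {ι E F : Type*} [Fintype ι] [SeminormedAddCommGroup E]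
    [SeminormedAddCommGroup F] (x : ι → E) (x' : ι → F) : ℝ :=
  (∑ i, ∑ j, (‖x i - x j‖ - ‖x' i - x' j‖) ^ 2) / ∑ i, ∑ j, ‖x i - x j‖ ^ 2

theorem sum_sum_norm_sub_sq_pos {ι E : Type*} [Fintype ι] [NormedAddCommGroup E] {y : ι → E}
    (hy : ∃ i j, y i ≠ y j) : 0 < ∑ i, ∑ j, ‖y i - y j‖ ^ 2 := by
  obtain ⟨i, j, hij⟩ := hy
  have hpos : 0 < ‖y i - y j‖ ^ 2 := pow_pos (norm_sub_pos_iff.mpr hij) 2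
  exact Finset.sum_pos' (fun _ _ ↦ by positivity)
    ⟨i, Finset.mem_univ i, Finset.sum_pos' (fun _ _ ↦ by positivity) ⟨j, Finset.mem_univ j, hpos⟩⟩

section Orthogonal

variable {𝕜 E : Type*} [RCLike 𝕜] [SeminormedAddCommGroup E] [InnerProductSpace 𝕜 E]

theorem norm_add_eq_norm_add_mul_I_of_inner_eq_zero {a b : E} (hab : inner 𝕜 a b = 0) :
    ‖a + b‖ = ‖(‖a‖ + ‖b‖ * Complex.I : ℂ)‖ := by
  rw [Complex.norm_add_mul_I, sq, sq,
    ← norm_add_sq_eq_norm_sq_add_norm_sq_of_inner_eq_zero a b hab,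
    Real.sqrt_mul_self (norm_nonneg _)]

theorem abs_norm_add_sub_norm_add_le_of_inner_eq_zero {a b c : E} (hab : inner 𝕜 a b = 0)
    (hac : inner 𝕜 a c = 0) : |‖a + b‖ - ‖a + c‖| ≤ |‖b‖ - ‖c‖| := by
  rw [norm_add_eq_norm_add_mul_I_of_inner_eq_zero hab,
    norm_add_eq_norm_add_mul_I_of_inner_eq_zero hac]
  calc |‖(‖a‖ + ‖b‖ * Complex.I : ℂ)‖ - ‖(‖a‖ + ‖c‖ * Complex.I : ℂ)‖|
      ≤ ‖(‖a‖ + ‖b‖ * Complex.I : ℂ) - (‖a‖ + ‖c‖ * Complex.I)‖ := abs_norm_sub_norm_le _ _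
    _ = ‖((‖b‖ - ‖c‖ : ℝ) : ℂ) * Complex.I‖ := by
      push_cast
      ring_nf
    _ = |‖b‖ - ‖c‖| := by
      rw [norm_mul, Complex.norm_I, mul_one, Complex.norm_real, Real.norm_eq_abs]

theorem sum_sum_sq_norm_sub_add_le {ι : Type*} [Fintype ι] {z y r : ι → E}
    (hzy : ∀ i j, inner 𝕜 (z i - z j) (y i - y j) = 0)
    (hzr : ∀ i j, inner 𝕜 (z i - z j) (r i - r j) = 0) :
    ∑ i, ∑ j, (‖(z + y) i - (z + y) j‖ - ‖(z + r) i - (z + r) j‖) ^ 2 ≤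
      ∑ i, ∑ j, (‖y i - y j‖ - ‖r i - r j‖) ^ 2 := by
  refine Finset.sum_le_sum fun i _ ↦ Finset.sum_le_sum fun j _ ↦ ?_
  simp only [Pi.add_apply, add_sub_add_comm]
  exact sq_le_sq.mpr (abs_norm_add_sub_norm_add_le_of_inner_eq_zero (hzy i j) (hzr i j))

end Orthogonal

theorem inner_sub_sub_eq_zero_of_mem_orthogonal {𝕜 ι E : Type*} [RCLike 𝕜] [NormedAddCommGroup E]
    [InnerProductSpace 𝕜 E] {S : Submodule 𝕜 E} {u v : ι → E}
    (hu : ∀ i, u i ∈ S) (hv : ∀ i, v i ∈ Sᗮ) (i j : ι) : inner 𝕜 (u i - u j) (v i - v j) = 0 :=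
  Submodule.inner_right_of_mem_orthogonal (S.sub_mem (hu i) (hu j)) (Sᗮ.sub_mem (hv i) (hv j))

theorem stmt7_general {𝕜 ι E : Type*} [RCLike 𝕜] [Fintype ι] [NormedAddCommGroup E]
    [InnerProductSpace 𝕜 E] {z y r : ι → E}
    (hzy : ∀ i j, inner 𝕜 (z i - z j) (y i - y j) = 0)
    (hzr : ∀ i j, inner 𝕜 (z i - z j) (r i - r j) = 0) (hy : ∃ i j, y i ≠ y j) {p : ℝ}
    (hp : ∑ i, ∑ j, ‖y i - y j‖ ^ 2 = (1 - p) * ∑ i, ∑ j, ‖(z + y) i - (z + y) j‖ ^ 2) :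
    sqStress (z + y) (z + r) ≤ (1 - p) * sqStress y r := by
  have hp_ne : 1 - p ≠ 0 := left_ne_zero_of_mul (hp ▸ (sum_sum_norm_sub_sq_pos hy).ne')
  calc sqStress (z + y) (z + r)
      ≤ (∑ i, ∑ j, (‖y i - y j‖ - ‖r i - r j‖) ^ 2) /
          ∑ i, ∑ j, ‖(z + y) i - (z + y) j‖ ^ 2 :=
        div_le_div_of_nonneg_right (sum_sum_sq_norm_sub_add_le hzy hzr) (by positivity)
    _ = (1 - p) * sqStress y r := by
      rw [sqStress, hp, ← mul_div_assoc, mul_div_mul_left _ _ hp_ne]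

/-- Key step of the DiffRed Stress bound: if `xᵢ = zᵢ + yᵢ` with `zᵢ ∈ S`, `yᵢ ∈ Sᗮ`,
embeddings `x̃ᵢ = zᵢ + rᵢ` with `rᵢ ∈ Sᗮ`, not all `xᵢ` equal, not all `yᵢ` equal, and
`Σ_{i,j} ‖yᵢ − yⱼ‖² = (1−p) Σ_{i,j} ‖xᵢ − xⱼ‖²` with `p ∈ [0,1)`, then
`Λ_S² ≤ (1−p) · Λ_S(Y,R)²`. -/
theorem stmt7 (n D : ℕ) (S : Submodule ℝ (EuclideanSpace ℝ (Fin D)))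
    (x z y r : Fin n → EuclideanSpace ℝ (Fin D))
    (hzS : ∀ i, z i ∈ S) (hyS : ∀ i, y i ∈ Sᗮ) (hrS : ∀ i, r i ∈ Sᗮ)
    (hx : ∀ i, x i = z i + y i)
    (hxne : ∃ i j, x i ≠ x j) (hyne : ∃ i j, y i ≠ y j)
    (p : ℝ) (hp : p ∈ Set.Ico (0 : ℝ) 1)
    (hres : ∑ i, ∑ j, ‖y i - y j‖ ^ 2 = (1 - p) * ∑ i, ∑ j, ‖x i - x j‖ ^ 2) :
    (∑ i, ∑ j, (‖x i - x j‖ - ‖(z i + r i) - (z j + r j)‖) ^ 2) /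
        (∑ i, ∑ j, ‖x i - x j‖ ^ 2)
      ≤ (1 - p) *
        ((∑ i, ∑ j, (‖y i - y j‖ - ‖r i - r j‖) ^ 2) / (∑ i, ∑ j, ‖y i - y j‖ ^ 2)) := by
  obtain rfl : x = z + y := funext hx
  exact stmt7_general (inner_sub_sub_eq_zero_of_mem_orthogonal hzS hyS)
    (inner_sub_sub_eq_zero_of_mem_orthogonal hzS hrS) hyne hres
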